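/- Let l > 0, τ > 0, β > 0 and let u : [0,l] × [0,τ] → ℝ be four times continuously differentiable with ∫₀ˡ ξ · u_t(ξ,t) dξ = 0 for all t ∈ [0,τ]. Then β ∫₀^τ ∫₀ˡ u_ttxx(x,t) · (∫ₓˡ ξ u_t(ξ,t) dξ) dx dt = β ∫₀^τ ∫₀ˡ x · u_ttx(x,t) u_t(x,t) dx dt. -/

import Mathlib

/-!
For fixed `t`, integrate by parts once in `x`: `u_ttxx` is the `x`-derivative of `u_ttx`, while
`x ↦ ∫ₓˡ ξ u_t dξ` has derivative `-x u_t` and vanishes at `x = l` trivially and at `x = 0` by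
hypothesis, so there is no boundary term (`integral_mul_tail_eq`).

The function `u` is only known to be smooth on the closed rectangle, so the two-sided partial
derivatives may be junk on its boundary. They are therefore compared with directional derivatives
taken within the rectangle (`dirDeriv`), which are continuous up to the boundary and agree with the
two-sided ones in the interior (`pderivT_eq_dirDeriv`, `pderivX_eq_dirDeriv`); the boundary is
negligible for the integrals.
-/

open MeasureTheory

/-- Partial derivative in the time (second) variable. -/
noncomputable def pderivT (u : ℝ → ℝ → ℝ) (x t : ℝ) : ℝ := deriv (u x) t

/-- Partial derivative in the space (first) variable. -/
noncomputable def pderivX (u : ℝ → ℝ → ℝ) (x t : ℝ) : ℝ := deriv (fun ξ => u ξ t) x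

open Set

/-- Integration by parts against the tail integral of a function `a` of mean zero. -/
lemma integral_mul_tail_eq {l : ℝ} (hl : 0 < l) {a c d : ℝ → ℝ}
    (ha : ContinuousOn a (Icc 0 l)) (hc : ContinuousOn c (Icc 0 l))
    (hd : ContinuousOn d (Icc 0 l)) (hcd : ∀ x ∈ Ioo 0 l, HasDerivAt c (d x) x)
    (h0 : ∫ ξ in (0:ℝ)..l, a ξ = 0) :
    ∫ x in (0:ℝ)..l, d x * ∫ ξ in x..l, a ξ = ∫ x in (0:ℝ)..l, c x * a x := by
  -- A continuous extension of `a` to the line makes its primitive differentiable everywhere.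
  obtain ⟨b, hb, hab⟩ : ∃ b : ℝ → ℝ, Continuous b ∧ EqOn a b (Icc 0 l) :=
    ⟨IccExtend hl.le ((Icc 0 l).domRestrict a), ha.domRestrict.Icc_extend',
      fun x hx => (IccExtend_of_mem hl.le ((Icc 0 l).domRestrict a) hx).symm⟩
  have htail : ∀ x ∈ Icc 0 l, ∫ ξ in x..l, a ξ = ∫ ξ in x..l, b ξ := fun x hx =>
    intervalIntegral.integral_congr fun y hy => by
      rw [uIcc_of_le hx.2] at hy
      exact hab ⟨hx.1.trans hy.1, hy.2⟩
  have hder : ∀ x, HasDerivAt (fun x => ∫ ξ in x..l, b ξ) (-b x) x := fun x =>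
    intervalIntegral.integral_hasDerivAt_left (hb.intervalIntegrable _ _)
      hb.stronglyMeasurable.stronglyMeasurableAtFilter hb.continuousAt
  have hu : uIcc 0 l = Icc 0 l := uIcc_of_le hl.le
  have key := intervalIntegral.integral_mul_deriv_eq_deriv_mul_of_hasDerivAt
    (a := 0) (b := l) (u := c) (u' := d) (v := fun x => ∫ ξ in x..l, b ξ) (v' := fun x => -b x)
    (hu ▸ hc) (fun x _ => (hder x).continuousAt.continuousWithinAt)
    (by rw [min_eq_left hl.le, max_eq_right hl.le]; exact hcd) (fun x _ => hder x)
    ((hu ▸ hd : ContinuousOn d (uIcc 0 l)).intervalIntegrable) (hb.neg.intervalIntegrable _ _)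
  rw [← htail 0 ⟨le_rfl, hl.le⟩, h0, intervalIntegral.integral_same] at key
  simp only [mul_neg, intervalIntegral.integral_neg, mul_zero, sub_zero, zero_sub, neg_inj] at key
  calc ∫ x in (0:ℝ)..l, d x * ∫ ξ in x..l, a ξ
      = ∫ x in (0:ℝ)..l, d x * ∫ ξ in x..l, b ξ :=
        intervalIntegral.integral_congr fun x hx => by
          simp only [htail x (hu ▸ hx)]
    _ = ∫ x in (0:ℝ)..l, c x * b x := key.symm
    _ = ∫ x in (0:ℝ)..l, c x * a x :=
        intervalIntegral.integral_congr fun x hx => by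
          simp only [hab (hu ▸ hx)]

/-- The derivative of `f` within `S`, at `p`, in the direction `e`. -/
noncomputable def dirDeriv (S : Set (ℝ × ℝ)) (e : ℝ × ℝ) (f : ℝ × ℝ → ℝ) (p : ℝ × ℝ) : ℝ :=
  fderivWithin ℝ f S p e

lemma contDiffOn_dirDeriv {S : Set (ℝ × ℝ)} (hS : UniqueDiffOn ℝ S) {e : ℝ × ℝ}
    {f : ℝ × ℝ → ℝ} {m n : WithTop ℕ∞} (hf : ContDiffOn ℝ n f S) (hmn : m + 1 ≤ n) :
    ContDiffOn ℝ m (dirDeriv S e f) S :=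
  (hf.fderivWithin hS hmn).clm_apply contDiffOn_const

lemma hasDerivAt_fst_dirDeriv {S : Set (ℝ × ℝ)} {f : ℝ × ℝ → ℝ} (hf : ContDiffOn ℝ 1 f S)
    {x t : ℝ} (hp : (x, t) ∈ interior S) :
    HasDerivAt (fun ξ => f (ξ, t)) (dirDeriv S (1, 0) f (x, t)) x := by
  have hfd := ((hf.differentiableOn one_ne_zero) _ (interior_subset hp)).hasFDerivWithinAt.hasFDerivAt
    (mem_interior_iff_mem_nhds.1 hp)
  exact hfd.comp_hasDerivAt x ((hasDerivAt_id x).prodMk (hasDerivAt_const x t))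

lemma hasDerivAt_snd_dirDeriv {S : Set (ℝ × ℝ)} {f : ℝ × ℝ → ℝ} (hf : ContDiffOn ℝ 1 f S)
    {x t : ℝ} (hp : (x, t) ∈ interior S) :
    HasDerivAt (fun s => f (x, s)) (dirDeriv S (0, 1) f (x, t)) t := by
  have hfd := ((hf.differentiableOn one_ne_zero) _ (interior_subset hp)).hasFDerivWithinAt.hasFDerivAt
    (mem_interior_iff_mem_nhds.1 hp)
  exact hfd.comp_hasDerivAt t ((hasDerivAt_const t x).prodMk (hasDerivAt_id t))

lemma pderivX_eq_dirDeriv {S : Set (ℝ × ℝ)} {f : ℝ × ℝ → ℝ} {g : ℝ → ℝ → ℝ}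
    (hf : ContDiffOn ℝ 1 f S) (hg : ∀ x t, (x, t) ∈ interior S → g x t = f (x, t)) :
    ∀ x t, (x, t) ∈ interior S → pderivX g x t = dirDeriv S (1, 0) f (x, t) := by
  intro x t hp
  refine ((hasDerivAt_fst_dirDeriv hf hp).congr_of_eventuallyEq ?_).deriv
  have hcont : ContinuousAt (fun ξ : ℝ => (ξ, t)) x := by fun_prop
  filter_upwards [hcont (isOpen_interior.mem_nhds hp)] with ξ hξ using hg ξ t hξ

lemma pderivT_eq_dirDeriv {S : Set (ℝ × ℝ)} {f : ℝ × ℝ → ℝ} {g : ℝ → ℝ → ℝ}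
    (hf : ContDiffOn ℝ 1 f S) (hg : ∀ x t, (x, t) ∈ interior S → g x t = f (x, t)) :
    ∀ x t, (x, t) ∈ interior S → pderivT g x t = dirDeriv S (0, 1) f (x, t) := by
  intro x t hp
  refine ((hasDerivAt_snd_dirDeriv hf hp).congr_of_eventuallyEq ?_).deriv
  have hcont : ContinuousAt (fun s : ℝ => (x, s)) t := by fun_prop
  filter_upwards [hcont (isOpen_interior.mem_nhds hp)] with s hs using hg x s hs

/-- Identity (14): for `u` of class `C⁴` on `[0,l] × [0,τ]` with `∫₀ˡ ξ u_t(ξ,t) dξ = 0`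
and `β > 0`,
`β∫₀^τ∫₀ˡ u_ttxx · (∫ₓˡ ξ u_t dξ) dx dt = β∫₀^τ∫₀ˡ x u_ttx u_t dx dt`. -/
theorem stmt_7 (l τ β : ℝ) (hl : 0 < l) (hτ : 0 < τ) (hβ : 0 < β) (u : ℝ → ℝ → ℝ)
    (hu : ContDiffOn ℝ 4 (Function.uncurry u) (Set.Icc 0 l ×ˢ Set.Icc 0 τ))
    (hint : ∀ t ∈ Set.Icc (0:ℝ) τ, (∫ ξ in (0:ℝ)..l, ξ * pderivT u ξ t) = 0) :
    (β * ∫ t in (0:ℝ)..τ, ∫ x in (0:ℝ)..l,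
        pderivX (pderivX (pderivT (pderivT u))) x t *
          (∫ ξ in x..l, ξ * pderivT u ξ t)) =
      β * ∫ t in (0:ℝ)..τ, ∫ x in (0:ℝ)..l,
        x * pderivX (pderivT (pderivT u)) x t * pderivT u x t := by
  set S : Set (ℝ × ℝ) := Icc 0 l ×ˢ Icc 0 τ with hSdef
  have hS : UniqueDiffOn ℝ S := (uniqueDiffOn_Icc hl).prod (uniqueDiffOn_Icc hτ)
  have hint_S : interior S = Ioo 0 l ×ˢ Ioo 0 τ := by
    rw [hSdef, interior_prod_eq, interior_Icc, interior_Icc]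
  -- `A`, `B`, `C`, `D` are `u_t`, `u_tt`, `u_ttx`, `u_ttxx` continued up to the boundary.
  set A := dirDeriv S (0, 1) (Function.uncurry u)
  set B := dirDeriv S (0, 1) A
  set C := dirDeriv S (1, 0) B
  set D := dirDeriv S (1, 0) C
  have hA : ContDiffOn ℝ 3 A S := contDiffOn_dirDeriv hS hu (by norm_num)
  have hB : ContDiffOn ℝ 2 B S := contDiffOn_dirDeriv hS hA (by norm_num)
  have hC : ContDiffOn ℝ 1 C S := contDiffOn_dirDeriv hS hB (by norm_num)
  have hD : ContDiffOn ℝ 0 D S := contDiffOn_dirDeriv hS hC (by norm_num)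
  have eA := pderivT_eq_dirDeriv (g := u) (hu.of_le (by norm_num)) (fun _ _ _ => rfl)
  have eB := pderivT_eq_dirDeriv (hA.of_le (by norm_num)) eA
  have eC := pderivX_eq_dirDeriv (hB.of_le (by norm_num)) eB
  have eD := pderivX_eq_dirDeriv hC eC
  congr 1
  refine intervalIntegral.integral_congr_Ioo_of_le hτ.le fun t ht => ?_
  have hmem : ∀ x ∈ Ioo 0 l, (x, t) ∈ interior S := fun x hx => hint_S ▸ ⟨hx, ht⟩
  have hslice : ∀ {f : ℝ × ℝ → ℝ}, ContinuousOn f S →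
      ContinuousOn (fun x => f (x, t)) (Icc 0 l) := fun hf =>
    hf.comp (by fun_prop) fun x hx => ⟨hx, Ioo_subset_Icc_self ht⟩
  have htail : ∀ x ∈ Ico 0 l, ∫ ξ in x..l, ξ * pderivT u ξ t = ∫ ξ in x..l, ξ * A (ξ, t) :=
    fun x hx => intervalIntegral.integral_congr_Ioo_of_le hx.2.le fun y hy => by
      simp only [eA y t (hmem y ⟨hx.1.trans_lt hy.1, hy.2⟩), A]
  have h0 : ∫ ξ in (0:ℝ)..l, ξ * A (ξ, t) = 0 := by
    rw [← htail 0 ⟨le_rfl, hl⟩, hint t (Ioo_subset_Icc_self ht)]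
  have key := integral_mul_tail_eq hl (a := fun ξ => ξ * A (ξ, t))
    (continuousOn_id.mul (hslice hA.continuousOn)) (hslice hC.continuousOn)
    (hslice hD.continuousOn) (fun x hx => hasDerivAt_fst_dirDeriv hC (hmem x hx)) h0
  calc _ = ∫ x in (0:ℝ)..l, D (x, t) * ∫ ξ in x..l, ξ * A (ξ, t) :=
        intervalIntegral.integral_congr_Ioo_of_le hl.le fun x hx => by
          simp only [eD x t (hmem x hx), htail x (Ioo_subset_Ico_self hx), D, C, B]
    _ = _ := key
    _ = _ := intervalIntegral.integral_congr_Ioo_of_le hl.le fun x hx => by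
          simp only [eC x t (hmem x hx), eA x t (hmem x hx), C, B, A]
          ring
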